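/- Let a ≥ b ≥ k ≥ 1. Then φ_k = Σ_{t=0}^{k} (−1)^t C(b−t,k−t)·Φ_t and ψ_k = Σ_{t=1}^{k} (−1)^{t−1} C(b−t,k−t)·Φ_t, as linear maps Λ^a⊗Λ^b → Λ^a⊗Λ^b. -/

import Mathlib

open TensorProduct

set_option synthInstance.maxHeartbeats 1000000
set_option maxSynthPendingDepth 3
set_option maxHeartbeats 1000000

noncomputable section

namespace MMS

variable (K : Type) [Field K] [CharZero K] (n : ℕ)

/-- `V = K^n`, the natural module of `G = GL(n,K)`. -/
abbrev V : Type := Fin n → K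

/-- `Λ^p`, the `p`-th exterior power of `V`. -/
abbrev Lam (p : ℕ) : Type := ⋀[K]^p (V K n)

/-- The wedge `v_1 ∧ ⋯ ∧ v_p ∈ Λ^p`. -/
def wedge {p : ℕ} (v : Fin p → V K n) : Lam K n p :=
  ⟨ExteriorAlgebra.ιMulti K p v, ExteriorAlgebra.ιMulti_range K p (Set.mem_range_self v)⟩

/-- Transport along an equality of degrees. -/
def ecast {p q : ℕ} (h : p = q) : Lam K n p ≃ₗ[K] Lam K n q :=
  h ▸ LinearEquiv.refl K (Lam K n p)

/-- `m` is the wedge multiplication map `Λ^p ⊗ Λ^q → Λ^{p+q}`. -/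
def IsMulMap (p q : ℕ) (m : Lam K n p ⊗[K] Lam K n q →ₗ[K] Lam K n (p+q)) : Prop :=
  ∀ (v : Fin p → V K n) (w : Fin q → V K n),
    m (wedge K n v ⊗ₜ[K] wedge K n w) = wedge K n (Fin.append v w)

/-- The set of `(p,q)`-shuffles: permutations `σ` of `{1, …, p+q}` which are strictly
increasing on the first `p` and on the last `q` indices. -/
def shuffles (p q : ℕ) : Finset (Equiv.Perm (Fin (p+q))) :=
  Finset.univ.filter (fun σ =>
    (∀ i j : Fin (p+q), i < j → (j : ℕ) < p → σ i < σ j) ∧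
    (∀ i j : Fin (p+q), i < j → p ≤ (i : ℕ) → σ i < σ j))

/-- `D` is the component `Δ_{p,q} : Λ^{p+q} → Λ^p ⊗ Λ^q` of the comultiplication, i.e.
`Δ_{p,q}(v_1 ∧ ⋯ ∧ v_{p+q}) = Σ_σ sgn(σ) (v_{σ(1)} ∧ ⋯ ∧ v_{σ(p)}) ⊗ (v_{σ(p+1)} ∧ ⋯ ∧ v_{σ(p+q)})`,
the sum being over all `(p,q)`-shuffles. -/
def IsComulMap (p q : ℕ) (D : Lam K n (p+q) →ₗ[K] Lam K n p ⊗[K] Lam K n q) : Prop :=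
  ∀ v : Fin (p+q) → V K n,
    D (wedge K n v) =
      ∑ σ ∈ shuffles p q,
        (Equiv.Perm.sign σ : ℤ) •
          (wedge K n (fun i => v (σ (Fin.castAdd q i))) ⊗ₜ[K]
            wedge K n (fun i => v (σ (Fin.natAdd p i))))

variable (mf : ∀ p q : ℕ, Lam K n p ⊗[K] Lam K n q →ₗ[K] Lam K n (p+q))
variable (Df : ∀ p q : ℕ, Lam K n (p+q) →ₗ[K] Lam K n p ⊗[K] Lam K n q)

/-- The map `δ_t = (m ⊗ 1) ∘ (1 ⊗ Δ_{t,b-t}) : Λ^a ⊗ Λ^b → Λ^{a+t} ⊗ Λ^{b-t}`. -/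
def deltaMap (a b t : ℕ) (ht : t ≤ b) :
    Lam K n a ⊗[K] Lam K n b →ₗ[K] Lam K n (a+t) ⊗[K] Lam K n (b-t) :=
  (TensorProduct.map (mf a t) LinearMap.id)
    ∘ₗ (TensorProduct.assoc K (Lam K n a) (Lam K n t) (Lam K n (b-t))).symm.toLinearMap
    ∘ₗ (TensorProduct.map LinearMap.id
        ((Df t (b-t)) ∘ₗ (ecast K n (by omega : b = t + (b-t))).toLinearMap))

/-- The map `θ_t = (1 ⊗ m) ∘ (Δ_{a-t,t} ⊗ 1) : Λ^a ⊗ Λ^b → Λ^{a-t} ⊗ Λ^{b+t}`. -/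
def thetaMap (a b t : ℕ) (ht : t ≤ a) :
    Lam K n a ⊗[K] Lam K n b →ₗ[K] Lam K n (a-t) ⊗[K] Lam K n (b+t) :=
  (TensorProduct.map LinearMap.id
      ((ecast K n (by omega : t + b = b + t)).toLinearMap ∘ₗ mf t b))
    ∘ₗ (TensorProduct.assoc K (Lam K n (a-t)) (Lam K n t) (Lam K n b)).toLinearMap
    ∘ₗ (TensorProduct.map
        ((Df (a-t) t) ∘ₗ (ecast K n (by omega : a = (a-t) + t)).toLinearMap) LinearMap.id)

/-- The map `Φ_t = θ_t ∘ δ_t : Λ^a ⊗ Λ^b → Λ^a ⊗ Λ^b`. -/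
def PhiMap (a b t : ℕ) (hta : t ≤ a) (htb : t ≤ b) :
    Lam K n a ⊗[K] Lam K n b →ₗ[K] Lam K n a ⊗[K] Lam K n b :=
  (TensorProduct.congr (ecast K n (by omega : a + t - t = a))
      (ecast K n (by omega : b - t + t = b))).toLinearMap
    ∘ₗ thetaMap K n mf Df (a+t) (b-t) t (by omega)
    ∘ₗ deltaMap K n mf Df a b t htb

/-- The map `Φ_t`, extended by `0` to all `t`. -/
def PhiMap' (a b t : ℕ) :
    Lam K n a ⊗[K] Lam K n b →ₗ[K] Lam K n a ⊗[K] Lam K n b :=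
  if h : t ≤ a ∧ t ≤ b then PhiMap K n mf Df a b t h.1 h.2 else 0

/-- The map `θ_1 : Λ^{a+1} ⊗ Λ^{b-1} → Λ^a ⊗ Λ^b` (for `b ≥ 1`). -/
def theta1 (a b : ℕ) (hb : 1 ≤ b) :
    Lam K n (a+1) ⊗[K] Lam K n (b-1) →ₗ[K] Lam K n a ⊗[K] Lam K n b :=
  (TensorProduct.congr (ecast K n (by omega : a + 1 - 1 = a))
      (ecast K n (by omega : b - 1 + 1 = b))).toLinearMap
    ∘ₗ thetaMap K n mf Df (a+1) (b-1) 1 (by omega)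

/-- The submodule of relations defining the Schur module `L_{(a,b)}`: the image of
`θ_1` if `b ≥ 1`, and `0` if `b = 0`. -/
def schurRel (a b : ℕ) : Submodule K (Lam K n a ⊗[K] Lam K n b) :=
  if hb : 1 ≤ b then LinearMap.range (theta1 K n mf Df a b hb) else ⊥

/-- The Schur module `L_{(a,b)}`, realized as the cokernel of `θ_1` (in characteristic zero). -/
abbrev SchurL (a b : ℕ) : Type :=
  (Lam K n a ⊗[K] Lam K n b) ⧸ schurRel K n mf Df a b

/-- The projection `π_{(a,b)} : Λ^a ⊗ Λ^b → L_{(a,b)}`. -/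
def schurProj (a b : ℕ) : Lam K n a ⊗[K] Lam K n b →ₗ[K] SchurL K n mf Df a b :=
  (schurRel K n mf Df a b).mkQ

/-- The coefficient `c_t(a,b,i) = C(i,t)·C(a-b+t+i,t)`. -/
def cCoef (a b t i : ℕ) : ℕ := (i.choose t) * ((a-b+t+i).choose t)

/-- The group `G = GL(n,K)`. -/
abbrev GLn : Type := Matrix.GeneralLinearGroup (Fin n) K

/-- `rho` is the family of natural actions of `G = GL(n,K)` on the exterior powers `Λ^p`
of the natural module `V = K^n`. -/
def IsExtAction (rho : ∀ p : ℕ, GLn K n → (Lam K n p →ₗ[K] Lam K n p)) : Prop :=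
  ∀ (p : ℕ) (g : GLn K n) (v : Fin p → V K n),
    rho p g (wedge K n v) =
      wedge K n (fun i => Matrix.toLin' (g : Matrix (Fin n) (Fin n) K) (v i))

/-- The action of `g ∈ GL(n,K)` on `Λ^a ⊗ Λ^b`. -/
def rhoT (rho : ∀ p : ℕ, GLn K n → (Lam K n p →ₗ[K] Lam K n p)) (a b : ℕ) (g : GLn K n) :
    Lam K n a ⊗[K] Lam K n b →ₗ[K] Lam K n a ⊗[K] Lam K n b :=
  TensorProduct.map (rho a g) (rho b g)

/-- The quotients `M₁ ⧸ N₁` and `M₂ ⧸ N₂` are isomorphic as representations, with respect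
to the given actions `ρ₁, ρ₂` on `M₁` and `M₂` (which descend to the quotients). -/
def IsQuotIso {G' : Type} {M₁ M₂ : Type} [AddCommGroup M₁] [Module K M₁]
    [AddCommGroup M₂] [Module K M₂]
    (N₁ : Submodule K M₁) (N₂ : Submodule K M₂)
    (ρ₁ : G' → M₁ →ₗ[K] M₁) (ρ₂ : G' → M₂ →ₗ[K] M₂) : Prop :=
  ∃ e : (M₁ ⧸ N₁) ≃ₗ[K] (M₂ ⧸ N₂),
    ∀ (g : G') (x : M₁) (y : M₂),
      e (Submodule.Quotient.mk x) = Submodule.Quotient.mk y →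
      e (Submodule.Quotient.mk (ρ₁ g x)) = Submodule.Quotient.mk (ρ₂ g y)

/-- The "multiply in pairs" map
`(Λ^{p₁} ⊗ Λ^{q₁}) ⊗ (Λ^{p₂} ⊗ Λ^{q₂}) → Λ^{p₁+p₂} ⊗ Λ^{q₁+q₂}`. -/
def pairMul (p₁ q₁ p₂ q₂ : ℕ) :
    (Lam K n p₁ ⊗[K] Lam K n q₁) ⊗[K] (Lam K n p₂ ⊗[K] Lam K n q₂) →ₗ[K]
      Lam K n (p₁+p₂) ⊗[K] Lam K n (q₁+q₂) :=
  (TensorProduct.map (mf p₁ p₂) (mf q₁ q₂))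
    ∘ₗ (TensorProduct.tensorTensorTensorComm K (Lam K n p₁) (Lam K n q₁)
        (Lam K n p₂) (Lam K n q₂)).toLinearMap

/-- The map `φ_k = (m ⊗ m) ∘ (1 ⊗ τ ⊗ 1) ∘ (Δ_{a-k,k} ⊗ Δ_{k,b-k}) : Λ^a ⊗ Λ^b → Λ^a ⊗ Λ^b`. -/
def phiSmall (a b k : ℕ) (hka : k ≤ a) (hkb : k ≤ b) :
    Lam K n a ⊗[K] Lam K n b →ₗ[K] Lam K n a ⊗[K] Lam K n b :=
  (TensorProduct.congr (ecast K n (by omega : (a-k) + k = a))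
      (ecast K n (by omega : k + (b-k) = b))).toLinearMap
    ∘ₗ pairMul K n mf (a-k) k k (b-k)
    ∘ₗ (TensorProduct.map
        ((Df (a-k) k) ∘ₗ (ecast K n (by omega : a = (a-k) + k)).toLinearMap)
        ((Df k (b-k)) ∘ₗ (ecast K n (by omega : b = k + (b-k))).toLinearMap))

/-- The map `ψ_k = C(b,k)·1 - φ_k : Λ^a ⊗ Λ^b → Λ^a ⊗ Λ^b`. -/
def psiSmall (a b k : ℕ) (hka : k ≤ a) (hkb : k ≤ b) :
    Lam K n a ⊗[K] Lam K n b →ₗ[K] Lam K n a ⊗[K] Lam K n b :=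
  (Nat.choose b k : K) • LinearMap.id - phiSmall K n mf Df a b k hka hkb

/-- The map `β_k = (m ⊗ m) ∘ (1 ⊗ τ ⊗ 1) ∘ (Δ_{a-k,k} ⊗ 1 ⊗ 1) : Λ^a ⊗ (Λ^k ⊗ Λ^{b-k}) → Λ^a ⊗ Λ^b`. -/
def betaMap (a b k : ℕ) (hka : k ≤ a) (hkb : k ≤ b) :
    Lam K n a ⊗[K] (Lam K n k ⊗[K] Lam K n (b-k)) →ₗ[K] Lam K n a ⊗[K] Lam K n b :=
  (TensorProduct.congr (ecast K n (by omega : (a-k) + k = a))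
      (ecast K n (by omega : k + (b-k) = b))).toLinearMap
    ∘ₗ pairMul K n mf (a-k) k k (b-k)
    ∘ₗ (TensorProduct.map
        ((Df (a-k) k) ∘ₗ (ecast K n (by omega : a = (a-k) + k)).toLinearMap)
        LinearMap.id)

/-- The map `γ_k : Λ^a ⊗ (Λ^k ⊗ Λ^{b-k}) → Λ^a ⊗ Λ^b`,
`γ_k(x ⊗ y ⊗ z) = x ⊗ (y ∧ z) - β_k(x ⊗ y ⊗ z)`. -/
def gammaMap (a b k : ℕ) (hka : k ≤ a) (hkb : k ≤ b) :
    Lam K n a ⊗[K] (Lam K n k ⊗[K] Lam K n (b-k)) →ₗ[K] Lam K n a ⊗[K] Lam K n b :=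
  (TensorProduct.map LinearMap.id
      ((ecast K n (by omega : k + (b-k) = b)).toLinearMap ∘ₗ mf k (b-k)))
    - betaMap K n mf Df a b k hka hkb

/-- The quantity `d_k(a,b,t)` (for the given `i`), from Lemma 5.3 of the paper. -/
def dInt (a b k i t : ℕ) : ℤ :=
  1 - ∑ j ∈ Finset.Icc (i - min (b-k) i) t,
        (-1:ℤ)^j * ((a-k+j).choose (a-k) : ℤ) * ((b-k+t-i).choose (t-j) : ℤ)

end MMS

namespace MMS

/-!
Identify `Λ(V) ⊗ Λ(V)` with `Λ(V × V)` and let the matrix `[[1, s], [r, 1]]` act: it sends `x ⊗ y`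
to the product of the image of `x` under `v ↦ (v, r v)` and the image of `y` under `v ↦ (s v, v)`,
in which the coefficient of `r ^ k * s ^ k` is `(-1) ^ k φ_k(x ⊗ y)`, the sign coming from the
exchange of two factors of degree `k`.

Factor the matrix as `[[1, 0], [r, 1]] * [[1, s], [0, 1 - r s]]`. The second factor sends `x ⊗ y` to
`∑ t, s ^ t * (1 - r s) ^ (b - t) δ_t(x ⊗ y)`, and the part of degree `t` in `r` of the first one is
`θ_t`. A monomial `r ^ k * s ^ k` thus takes `(r s) ^ (k - t)` from `(1 - r s) ^ (b - t)` and
`r ^ t` from the first factor, which contributes `(-1) ^ (k - t) C(b - t, k - t) Φ_t(x ⊗ y)`.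
-/

section ExteriorAlgebraProd

variable {K M P N : Type*} [CommRing K] [AddCommGroup M] [Module K M]
  [AddCommGroup P] [Module K P] [AddCommGroup N] [Module K N]

variable (K M P) in
/-- The isomorphism `Λ(M) ⊗ Λ(P) ≃ Λ(M × P)`, used to replace identities between maps of tensor
products by identities in a single algebra. It is only linear: it becomes multiplicative for the
graded tensor product, which lives on the same module. -/
def tensorEquivProd :
    ExteriorAlgebra K M ⊗[K] ExteriorAlgebra K P ≃ₗ[K] ExteriorAlgebra K (M × P) :=
  GradedTensorProduct.of K (CliffordAlgebra.evenOdd (0 : QuadraticForm K M))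
      (CliffordAlgebra.evenOdd (0 : QuadraticForm K P)) ≪≫ₗ
    (CliffordAlgebra.prodEquiv 0 0).symm.toLinearEquiv ≪≫ₗ
    (CliffordAlgebra.equivOfIsometry
      (Q₁ := QuadraticMap.prod 0 0) (Q₂ := (0 : QuadraticForm K (M × P)))
      { LinearEquiv.refl K (M × P) with map_app' := fun _ => by simp }).toLinearEquiv

theorem tensorEquivProd_tmul (x : ExteriorAlgebra K M) (y : ExteriorAlgebra K P) :
    tensorEquivProd K M P (x ⊗ₜ y) =
      ExteriorAlgebra.map (LinearMap.inl K M P) x *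
        ExteriorAlgebra.map (LinearMap.inr K M P) y := by
  have toProd_tmul : CliffordAlgebra.toProd 0 0 (GradedTensorProduct.of K _ _ (x ⊗ₜ y)) =
      CliffordAlgebra.map (.inl (0 : QuadraticForm K M) (0 : QuadraticForm K P)) x *
        CliffordAlgebra.map (.inr _ _) y :=
    GradedTensorProduct.lift_tmul _ _ _ _ _ _ _
  simp only [tensorEquivProd, LinearEquiv.trans_apply, AlgEquiv.toLinearEquiv_apply,
    CliffordAlgebra.prodEquiv_symm_apply, toProd_tmul, map_mul,
    CliffordAlgebra.equivOfIsometry_apply, ← AlgHom.comp_apply, CliffordAlgebra.map_comp_map]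
  rfl

theorem mem_evenOdd_of_mem_exteriorPower {p : ℕ} {x : ExteriorAlgebra K M} (hx : x ∈ ⋀[K]^p M) :
    x ∈ CliffordAlgebra.evenOdd (0 : QuadraticForm K M) p :=
  le_iSup (fun i : { i : ℕ // (i : ZMod 2) = p } =>
    LinearMap.range (CliffordAlgebra.ι (0 : QuadraticForm K M)) ^ (i : ℕ)) ⟨p, rfl⟩ hx

theorem map_mul_map_comm (f : M →ₗ[K] N) (g : P →ₗ[K] N) {p q : ℕ} {x : ExteriorAlgebra K M}
    {y : ExteriorAlgebra K P} (hx : x ∈ ⋀[K]^p M) (hy : y ∈ ⋀[K]^q P) :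
    ExteriorAlgebra.map f x * ExteriorAlgebra.map g y =
      (-1 : K) ^ (p * q) • (ExteriorAlgebra.map g y * ExteriorAlgebra.map f x) := by
  have comm := CliffordAlgebra.map_mul_map_of_isOrtho_of_mem_evenOdd
    (Qₙ := (0 : QuadraticForm K N)) { f with map_app' := fun _ => rfl }
    { g with map_app' := fun _ => rfl } (fun _ _ => by simp [QuadraticMap.IsOrtho]) x y
    (mem_evenOdd_of_mem_exteriorPower hx) (mem_evenOdd_of_mem_exteriorPower hy)
  rw [← Nat.cast_mul, uzpow_natCast, mul_comm q p, Units.smul_def, ← Int.cast_smul_eq_zsmul K,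
    Units.val_pow_eq_pow_val, Units.val_neg, Units.val_one, Int.cast_pow, Int.cast_neg,
    Int.cast_one] at comm
  exact comm

end ExteriorAlgebraProd

section Contract

variable {K R A : Type*} [CommSemiring K] [Semiring R] [Algebra K R] [Semiring A] [Algebra K A]

/-- Contraction of the first factor of `R ⊗ A` against a linear form on `R`. With `R` a polynomial
ring and `φ` a coefficient form, it extracts a coefficient of a polynomial with values in `A`. -/
def contract (φ : R →ₗ[K] K) : R ⊗[K] A →ₗ[K] A :=
  (TensorProduct.lid K A).toLinearMap ∘ₗ φ.rTensor A

@[simp]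
theorem contract_tmul (φ : R →ₗ[K] K) (r : R) (a : A) : contract φ (r ⊗ₜ[K] a) = φ r • a := by
  simp [contract]

theorem contract_mul_one_tmul (φ : R →ₗ[K] K) (z : R ⊗[K] A) (a : A) :
    contract φ (z * 1 ⊗ₜ a) = contract φ z * a := by
  induction z with
  | zero => simp
  | add u v hu hv => simp only [add_mul, map_add, hu, hv]
  | tmul r b => simp

end Contract

section Pencil

variable {K R S M N : Type*} [CommRing K] [CommRing R] [Algebra K R] [CommRing S] [Algebra K S]
  [AddCommGroup M] [Module K M] [AddCommGroup N] [Module K N]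

/-- The map of exterior algebras induced by the linear combination `α f + β g` whose coefficients
lie in a `K`-algebra `R`; hence it takes values in `R ⊗ Λ(N)`. -/
def pencil (α β : R) (f g : M →ₗ[K] N) : ExteriorAlgebra K M →ₐ[K] R ⊗[K] ExteriorAlgebra K N :=
  ExteriorAlgebra.lift K
    ⟨TensorProduct.mk K R _ α ∘ₗ ExteriorAlgebra.ι K ∘ₗ f +
      TensorProduct.mk K R _ β ∘ₗ ExteriorAlgebra.ι K ∘ₗ g, fun m => by
        simp [add_mul, mul_add, mul_comm β α, ← TensorProduct.tmul_add,
          ExteriorAlgebra.ι_add_mul_swap]⟩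

@[simp]
theorem pencil_ι (α β : R) (f g : M →ₗ[K] N) (m : M) :
    pencil α β f g (ExteriorAlgebra.ι K m) =
      α ⊗ₜ ExteriorAlgebra.ι K (f m) + β ⊗ₜ ExteriorAlgebra.ι K (g m) :=
  ExteriorAlgebra.lift_ι_apply _ _ _ _

theorem pencil_one_zero (f g : M →ₗ[K] N) (x : ExteriorAlgebra K M) :
    pencil (1 : R) 0 f g x = 1 ⊗ₜ ExteriorAlgebra.map f x := by
  have h : pencil (1 : R) 0 f g =
      Algebra.TensorProduct.includeRight.comp (ExteriorAlgebra.map f) := by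
    ext m
    simp
  exact DFunLike.congr_fun h x

theorem pencil_zero_one (f g : M →ₗ[K] N) (x : ExteriorAlgebra K M) :
    pencil (0 : R) 1 f g x = 1 ⊗ₜ ExteriorAlgebra.map g x := by
  have h : pencil (0 : R) 1 f g =
      Algebra.TensorProduct.includeRight.comp (ExteriorAlgebra.map g) := by
    ext m
    simp
  exact DFunLike.congr_fun h x

theorem map_pencil (F : R →ₐ[K] S) (α β : R) (f g : M →ₗ[K] N) (x : ExteriorAlgebra K M) :
    Algebra.TensorProduct.map F (AlgHom.id K _) (pencil α β f g x) =
      pencil (F α) (F β) f g x := by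
  have h : (Algebra.TensorProduct.map F (AlgHom.id K _)).comp (pencil α β f g) =
      pencil (F α) (F β) f g := by
    ext m
    simp
  exact DFunLike.congr_fun h x

theorem pencil_ιMulti (α β : R) (f g : M →ₗ[K] N) {m : ℕ} (v : Fin m → M) :
    pencil α β f g (ExteriorAlgebra.ιMulti K m v) =
      ∑ s : Finset (Fin m), (α ^ s.card * β ^ sᶜ.card) ⊗ₜ
        ExteriorAlgebra.ιMulti K m (s.piecewise (f ∘ v) (g ∘ v)) := by
  set prodMap := MultilinearMap.mkPiAlgebraFin R m (R ⊗[K] ExteriorAlgebra K N)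
  let incl : N → R ⊗[K] ExteriorAlgebra K N := fun z => 1 ⊗ₜ ExteriorAlgebra.ι K z
  have prodMap_incl (w : Fin m → N) : prodMap (incl ∘ w) = 1 ⊗ₜ ExteriorAlgebra.ιMulti K m w := by
    rw [ExteriorAlgebra.ιMulti_apply, ← Algebra.TensorProduct.includeRight_apply, map_list_prod,
      List.map_ofFn]
    rfl
  have pencil_eq : pencil α β f g (ExteriorAlgebra.ιMulti K m v) =
      prodMap (α • incl ∘ f ∘ v + β • incl ∘ g ∘ v) := by
    rw [ExteriorAlgebra.ιMulti_apply, map_list_prod, List.map_ofFn]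
    simp [prodMap, incl, Function.comp_def, Pi.add_def, Pi.smul_def, TensorProduct.smul_tmul']
  have piecewise_eq (s : Finset (Fin m)) :
      s.piecewise (α • incl ∘ f ∘ v) (β • incl ∘ g ∘ v) = fun i =>
        s.piecewise (fun _ => α) (fun _ => β) i • (incl ∘ s.piecewise (f ∘ v) (g ∘ v)) i := by
    ext1 i
    by_cases hi : i ∈ s <;> simp [hi]
  rw [pencil_eq, MultilinearMap.map_add_univ]
  refine Finset.sum_congr rfl fun s _ => ?_
  rw [piecewise_eq, MultilinearMap.map_smul_univ, prodMap_incl, Finset.prod_piecewise]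
  simp [TensorProduct.smul_tmul', Finset.compl_eq_univ_sdiff]

end Pencil

section Comul

open Polynomial

variable {K R M : Type*} [CommRing K] [CommRing R] [Algebra K R] [AddCommGroup M] [Module K M]

/-- The map of exterior algebras induced by `v ↦ (α v, β v)`, the generating function of the
components of the comultiplication of `Λ(M)`. -/
abbrev genComul (α β : R) : ExteriorAlgebra K M →ₐ[K] R ⊗[K] ExteriorAlgebra K (M × M) :=
  pencil α β (LinearMap.inl K M M) (LinearMap.inr K M M)

/-- The comultiplication of `Λ(M)`, composed with `Λ(M) ⊗ Λ(M) ≃ Λ(M × M)`: it is the component of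
degree `q` in the second copy of `M`, extracted as a coefficient of its generating function. -/
def comul (q : ℕ) : ExteriorAlgebra K M →ₗ[K] ExteriorAlgebra K (M × M) :=
  contract (lcoeff K q) ∘ₗ (genComul 1 (X : K[X])).toLinearMap

theorem comul_ιMulti (q : ℕ) {m : ℕ} (v : Fin m → M) :
    comul q (ExteriorAlgebra.ιMulti K m v) =
      ∑ s : Finset (Fin m) with sᶜ.card = q, ExteriorAlgebra.ιMulti K m
        (s.piecewise (LinearMap.inl K M M ∘ v) (LinearMap.inr K M M ∘ v)) := by
  rw [comul, LinearMap.comp_apply, AlgHom.toLinearMap_apply, pencil_ιMulti, map_sum,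
    Finset.sum_filter]
  refine Finset.sum_congr rfl fun s _ => ?_
  simp [coeff_X_pow, ite_smul, eq_comm]

theorem genComul_eq_sum (α β : R) {m : ℕ} {x : ExteriorAlgebra K M} (hx : x ∈ ⋀[K]^m M) :
    genComul α β x = ∑ pq ∈ Finset.HasAntidiagonal.antidiagonal m,
      (α ^ pq.1 * β ^ pq.2) ⊗ₜ comul pq.2 x := by
  rw [← ExteriorAlgebra.ιMulti_span_fixedDegree] at hx
  induction hx using Submodule.span_induction with
  | zero => simp
  | add u v _ _ hu hv => simp only [map_add, hu, hv, TensorProduct.tmul_add, Finset.sum_add_distrib]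
  | smul c u _ hu => simp only [map_smul, hu, TensorProduct.tmul_smul, Finset.smul_sum]
  | mem x hx =>
    obtain ⟨v, rfl⟩ := hx
    rw [pencil_ιMulti, ← Finset.sum_fiberwise_of_maps_to
      (t := Finset.HasAntidiagonal.antidiagonal m)
      (g := fun s : Finset (Fin m) => (s.card, sᶜ.card))
      (fun s _ => by simp [Finset.card_add_card_compl])]
    refine Finset.sum_congr rfl fun ⟨p, q⟩ hpq => ?_
    rw [Finset.HasAntidiagonal.mem_antidiagonal] at hpq
    rw [comul_ιMulti, TensorProduct.tmul_sum]
    have card_iff (s : Finset (Fin m)) : (s.card, sᶜ.card) = (p, q) ↔ sᶜ.card = q := by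
      have := s.card_add_card_compl
      rw [Fintype.card_fin] at this
      grind
    refine Finset.sum_congr (Finset.filter_congr fun s _ => card_iff s) fun s hs => ?_
    obtain ⟨rfl, rfl⟩ := Prod.mk.inj ((card_iff s).2 (Finset.mem_filter.1 hs).2)
    rfl

theorem comul_zero (x : ExteriorAlgebra K M) :
    comul 0 x = ExteriorAlgebra.map (LinearMap.inl K M M) x := by
  have contract_eq (w : K[X] ⊗[K] ExteriorAlgebra K (M × M)) : contract (lcoeff K 0) w =
      contract LinearMap.id (Algebra.TensorProduct.map (aeval (0 : K)) (AlgHom.id K _) w) := by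
    induction w with
    | zero => simp
    | add u v hu hv => simp only [map_add, hu, hv]
    | tmul p e => simp [coeff_zero_eq_aeval_zero]
  rw [comul, LinearMap.comp_apply, AlgHom.toLinearMap_apply, contract_eq, map_pencil]
  simp [pencil_one_zero]

theorem comul_self {m : ℕ} {x : ExteriorAlgebra K M} (hx : x ∈ ⋀[K]^m M) :
    comul m x = ExteriorAlgebra.map (LinearMap.inr K M M) x := by
  have h := congrArg (contract LinearMap.id) (genComul_eq_sum (0 : K) 1 hx)
  rw [Finset.Nat.sum_antidiagonal_eq_sum_range_succ_mk, Finset.sum_range_succ'] at h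
  simpa [pencil_zero_one] using h.symm

end Comul

section Gauss

open Polynomial

variable {K R S M : Type*} [CommRing K] [CommRing R] [Algebra K R] [CommRing S] [Algebra K S]
  [AddCommGroup M] [Module K M]

/-- The endomorphism of `R ⊗ Λ(M × M)` induced by the lower unitriangular matrix `[[1, 0], [r, 1]]`,
that is, by `(u, v) ↦ (u, r u + v)`. -/
def shear (r : R) : R ⊗[K] ExteriorAlgebra K (M × M) →ₐ[R] R ⊗[K] ExteriorAlgebra K (M × M) :=
  AlgHom.liftEquiv K R _ _ (pencil 1 r LinearMap.id (LinearMap.inr K M M ∘ₗ LinearMap.fst K M M))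

theorem shear_tmul (r s : R) (e : ExteriorAlgebra K (M × M)) :
    shear r (s ⊗ₜ[K] e) =
      s • pencil 1 r LinearMap.id (LinearMap.inr K M M ∘ₗ LinearMap.fst K M M) e :=
  AlgHom.liftEquiv_tmul _ _ _

theorem shear_genComul (r α β : R) (x : ExteriorAlgebra K M) :
    shear r (genComul α β x) = genComul α (r * α + β) x := by
  have h : ((shear r).restrictScalars K).comp (genComul α β) =
      genComul (M := M) α (r * α + β) := by
    ext m
    simp [shear_tmul, TensorProduct.smul_tmul', TensorProduct.add_tmul, mul_comm r α, add_assoc,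
      Prod.mk_zero_zero]
  exact DFunLike.congr_fun h x

/-- Gauss decomposition: `[[1, s], [r, 1]]` is the product of `[[1, 0], [r, 1]]` and
`[[1, s], [0, 1 - r s]]`. -/
theorem genComul_mul_genComul (r s : R) (x y : ExteriorAlgebra K M) :
    genComul 1 r x * genComul s 1 y =
      shear r (1 ⊗ₜ ExteriorAlgebra.map (LinearMap.inl K M M) x * genComul s (1 - r * s) y) := by
  rw [map_mul, shear_genComul, ← pencil_one_zero (R := R) _ (LinearMap.inr K M M), shear_genComul]
  simp

/-- The coefficient of `X ^ t` in the action of the lower unitriangular matrix `[[1, 0], [X, 1]]`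
on `Λ(M × M)`: the `t`-th divided power of the lowering operator, which moves `t` vectors from the
first copy of `M` to the second. -/
def lowering (t : ℕ) : ExteriorAlgebra K (M × M) →ₗ[K] ExteriorAlgebra K (M × M) :=
  contract (lcoeff K t) ∘ₗ (shear (X : K[X])).toLinearMap.restrictScalars K ∘ₗ
    TensorProduct.mk K _ _ 1

theorem lowering_map_inl_mul_map_inr (t : ℕ) (x y : ExteriorAlgebra K M) :
    lowering t (ExteriorAlgebra.map (LinearMap.inl K M M) x *
        ExteriorAlgebra.map (LinearMap.inr K M M) y) =
      comul t x * ExteriorAlgebra.map (LinearMap.inr K M M) y := by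
  have shear_mul : shear (X : K[X]) (1 ⊗ₜ (ExteriorAlgebra.map (LinearMap.inl K M M) x *
      ExteriorAlgebra.map (LinearMap.inr K M M) y)) =
        genComul 1 X x * 1 ⊗ₜ ExteriorAlgebra.map (LinearMap.inr K M M) y := by
    have := genComul_mul_genComul (X : K[X]) 0 x y
    simp only [mul_zero, sub_zero] at this
    rw [pencil_zero_one] at this
    simpa using this.symm
  simp only [lowering, comul, LinearMap.comp_apply, TensorProduct.mk_apply,
    LinearMap.restrictScalars_apply, AlgHom.toLinearMap_apply, shear_mul, contract_mul_one_tmul]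

theorem map_shear_one_tmul (F : R →ₐ[K] S) (r : R) (e : ExteriorAlgebra K (M × M)) :
    Algebra.TensorProduct.map F (AlgHom.id K _) (shear r (1 ⊗ₜ e)) = shear (F r) (1 ⊗ₜ e) := by
  rw [shear_tmul, shear_tmul, one_smul, one_smul, map_pencil, map_one]

theorem coeff_one_sub_C_mul_X_pow (r : R) (m j : ℕ) :
    ((1 - C r * X : R[X]) ^ m).coeff j = m.choose j * (-r) ^ j := by
  have h : (1 - C r * X : R[X]) ^ m = ((1 + X) ^ m).comp (C (-r) * X) := by
    simp [sub_eq_add_neg]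
  rw [h, comp_C_mul_X_coeff, coeff_one_add_X_pow]

variable (K) in
/-- The coefficient of `r ^ k * s ^ k` in a polynomial in `r` and `s`, encoded as an element of
`K[X][X]` with inner variable `r` and outer variable `s`. -/
def diagCoeff (k : ℕ) : K[X][X] →ₗ[K] K :=
  lcoeff K k ∘ₗ (lcoeff K[X] k).restrictScalars K

theorem diagCoeff_X_pow_mul (k t m : ℕ) (p : K[X]) :
    diagCoeff K k (X ^ t * (1 - C X * X) ^ m * C p) =
      if t ≤ k then (-1) ^ (k - t) * (m.choose (k - t) : K) * p.coeff t else 0 := by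
  simp only [diagCoeff, LinearMap.comp_apply, LinearMap.restrictScalars_apply, lcoeff_apply,
    coeff_mul_C, coeff_X_pow_mul', coeff_one_sub_C_mul_X_pow]
  split_ifs with htk
  · have h : ((m.choose (k - t) : K[X]) * (-X) ^ (k - t) * p) =
        X ^ (k - t) * (C ((-1) ^ (k - t) * (m.choose (k - t) : K)) * p) := by
      rw [neg_pow]
      simp only [map_mul, map_pow, map_neg, map_one, map_natCast]
      ring
    rw [h, coeff_X_pow_mul', if_pos (Nat.sub_le k t), Nat.sub_sub_self htk, coeff_C_mul]
  · simp

theorem contract_diagCoeff_smul_map {A : Type*} [Semiring A] [Algebra K A] (k t m : ℕ)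
    (w : K[X] ⊗[K] A) :
    contract (diagCoeff K k) ((X ^ t * (1 - C X * X) ^ m : K[X][X]) •
        Algebra.TensorProduct.map (CAlgHom (R := K)) (AlgHom.id K A) w) =
      if t ≤ k then ((-1) ^ (k - t) * (m.choose (k - t) : K)) • contract (lcoeff K t) w else 0 := by
  induction w with
  | zero => simp
  | add u v hu hv =>
    simp only [map_add, smul_add, hu, hv]
    split_ifs <;> simp
  | tmul p a =>
    rw [Algebra.TensorProduct.map_tmul, TensorProduct.smul_tmul', contract_tmul, contract_tmul,
      CAlgHom_apply, smul_eq_mul, diagCoeff_X_pow_mul, ite_smul, zero_smul, mul_smul, lcoeff_apply,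
      AlgHom.id_apply]

theorem contract_diagCoeff_genComul_mul (x : ExteriorAlgebra K M) {y : ExteriorAlgebra K M}
    {b k : ℕ} (hy : y ∈ ⋀[K]^b M) (hk : k ≤ b) :
    contract (diagCoeff K k) (genComul 1 (C X : K[X][X]) x * genComul X 1 y) =
      comul k x * comul (b - k) y := by
  have coeff_eq (t : ℕ) : contract (diagCoeff K k)
      (genComul 1 (C X : K[X][X]) x * (X ^ t) ⊗ₜ comul (b - t) y) =
        if t = k then comul k x * comul (b - k) y else 0 := by
    have contract_eq := contract_diagCoeff_smul_map k t 0 (genComul (1 : K[X]) X x)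
    rw [map_pencil, map_one, CAlgHom_apply, pow_zero, mul_one] at contract_eq
    have mul_eq : genComul 1 (C X : K[X][X]) x * (X ^ t) ⊗ₜ comul (b - t) y =
        (X ^ t : K[X][X]) • genComul 1 (C X : K[X][X]) x * 1 ⊗ₜ comul (b - t) y := by
      rw [smul_mul_assoc, ← mul_smul_comm, TensorProduct.smul_tmul', smul_eq_mul, mul_one]
    rw [mul_eq, contract_mul_one_tmul, contract_eq]
    rcases lt_trichotomy t k with h | rfl | h
    · rw [if_pos h.le, if_neg h.ne, Nat.choose_eq_zero_of_lt (Nat.sub_pos_of_lt h)]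
      simp
    · simp [comul]
    · rw [if_neg h.not_ge, if_neg h.ne', zero_mul]
  rw [genComul_eq_sum (X : K[X][X]) 1 hy, Finset.Nat.sum_antidiagonal_eq_sum_range_succ_mk,
    Finset.mul_sum, map_sum]
  simp only [one_pow, mul_one, coeff_eq]
  simp [hk]

theorem contract_diagCoeff_shear (e : ExteriorAlgebra K (M × M)) {y : ExteriorAlgebra K M}
    {b k : ℕ} (hy : y ∈ ⋀[K]^b M) (hk : k ≤ b) :
    contract (diagCoeff K k) (shear (C X : K[X][X]) (1 ⊗ₜ e * genComul X (1 - C X * X) y)) =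
      ∑ t ∈ Finset.range (k + 1), ((-1) ^ (k - t) * ((b - t).choose (k - t) : K)) •
        lowering t (e * comul (b - t) y) := by
  have coeff_eq (t : ℕ) : contract (diagCoeff K k)
      (shear (C X : K[X][X]) (1 ⊗ₜ e * (X ^ t * (1 - C X * X) ^ (b - t)) ⊗ₜ comul (b - t) y)) =
        if t ≤ k then ((-1) ^ (k - t) * ((b - t).choose (k - t) : K)) •
          lowering t (e * comul (b - t) y) else 0 := by
    have shear_eq :
        shear (C X : K[X][X]) (1 ⊗ₜ e * (X ^ t * (1 - C X * X) ^ (b - t)) ⊗ₜ comul (b - t) y) =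
          (X ^ t * (1 - C X * X) ^ (b - t) : K[X][X]) •
            Algebra.TensorProduct.map (CAlgHom (R := K)) (AlgHom.id K _)
              (shear (X : K[X]) (1 ⊗ₜ (e * comul (b - t) y))) := by
      rw [map_shear_one_tmul, CAlgHom_apply, ← map_smul, Algebra.TensorProduct.tmul_mul_tmul,
        TensorProduct.smul_tmul', smul_eq_mul, one_mul, mul_one]
    rw [shear_eq, contract_diagCoeff_smul_map]
    rfl
  rw [genComul_eq_sum _ _ hy, Finset.Nat.sum_antidiagonal_eq_sum_range_succ_mk, Finset.mul_sum,
    map_sum, map_sum]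
  simp only [coeff_eq, ← Finset.sum_filter]
  congr 1
  grind

theorem comul_mul_comul (x : ExteriorAlgebra K M) {y : ExteriorAlgebra K M} {b k : ℕ}
    (hy : y ∈ ⋀[K]^b M) (hk : k ≤ b) :
    comul k x * comul (b - k) y =
      ∑ t ∈ Finset.range (k + 1), ((-1) ^ (k - t) * ((b - t).choose (k - t) : K)) •
        lowering t (ExteriorAlgebra.map (LinearMap.inl K M M) x * comul (b - t) y) := by
  rw [← contract_diagCoeff_genComul_mul x hy hk, genComul_mul_genComul,
    contract_diagCoeff_shear _ hy hk]

end Gauss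

section Shuffles

variable {p q : ℕ}

/-- The set of values taken by `σ` on the first `p` indices; a `(p, q)`-shuffle is determined by
it. -/
def leadingSet (σ : Equiv.Perm (Fin (p + q))) : Finset (Fin (p + q)) :=
  Finset.univ.map ((Fin.castAddEmb q).trans σ.toEmbedding)

theorem coe_leadingSet (σ : Equiv.Perm (Fin (p + q))) :
    (leadingSet σ : Set (Fin (p + q))) = Set.range (σ ∘ Fin.castAdd q) := by
  ext i
  simp [leadingSet]

theorem card_leadingSet (σ : Equiv.Perm (Fin (p + q))) : (leadingSet σ).card = p := by
  simp [leadingSet]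

theorem apply_castAdd_mem_leadingSet (σ : Equiv.Perm (Fin (p + q))) (i : Fin p) :
    σ (Fin.castAdd q i) ∈ leadingSet σ := by
  simp [leadingSet]

theorem apply_natAdd_notMem_leadingSet (σ : Equiv.Perm (Fin (p + q))) (i : Fin q) :
    σ (Fin.natAdd p i) ∉ leadingSet σ := by
  simpa [leadingSet, Fin.ext_iff] using fun j => by omega

theorem coe_compl_leadingSet (σ : Equiv.Perm (Fin (p + q))) :
    ((leadingSet σ)ᶜ : Set (Fin (p + q))) = Set.range (σ ∘ Fin.natAdd p) := by
  ext i
  obtain ⟨i, rfl⟩ := σ.surjective i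
  induction i using Fin.addCases with
  | left j => simpa [apply_castAdd_mem_leadingSet, Fin.ext_iff] using fun k => by omega
  | right j => simp [apply_natAdd_notMem_leadingSet]

theorem mem_shuffles_iff (σ : Equiv.Perm (Fin (p + q))) :
    σ ∈ shuffles p q ↔ StrictMono (σ ∘ Fin.castAdd q) ∧ StrictMono (σ ∘ Fin.natAdd p) := by
  simp only [shuffles, Finset.mem_filter, Finset.mem_univ, true_and]
  refine and_congr ⟨fun h i j hij => h _ _ hij j.2, fun h i j hij hj => ?_⟩
    ⟨fun h i j hij => h _ _ (by simpa using hij) (by simp), fun h i j hij hi => ?_⟩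
  · exact h (a := ⟨i, lt_trans hij hj⟩) (b := ⟨j, hj⟩) hij
  · obtain ⟨i', rfl⟩ : ∃ i', Fin.natAdd p i' = i :=
      ⟨⟨i - p, by omega⟩, Fin.ext (Nat.add_sub_cancel' hi)⟩
    obtain ⟨j', rfl⟩ : ∃ j', Fin.natAdd p j' = j :=
      ⟨⟨j - p, by omega⟩, Fin.ext (Nat.add_sub_cancel' (hi.trans hij.le))⟩
    exact h (by simpa using hij)

theorem injOn_leadingSet :
    Set.InjOn leadingSet (shuffles p q : Set (Equiv.Perm (Fin (p + q)))) := by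
  intro σ hσ τ hτ h
  rw [Finset.mem_coe, mem_shuffles_iff] at hσ hτ
  have eq_left : σ ∘ Fin.castAdd q = τ ∘ Fin.castAdd q := by
    rw [← hσ.1.range_inj hτ.1, ← coe_leadingSet, ← coe_leadingSet, h]
  have eq_right : σ ∘ Fin.natAdd p = τ ∘ Fin.natAdd p := by
    rw [← hσ.2.range_inj hτ.2, ← coe_compl_leadingSet, ← coe_compl_leadingSet, h]
  ext1 i
  induction i using Fin.addCases with
  | left j => exact congrFun eq_left j
  | right j => exact congrFun eq_right j

theorem exists_mem_shuffles_leadingSet_eq {s : Finset (Fin (p + q))} (hs : s.card = p) :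
    ∃ σ ∈ shuffles p q, leadingSet σ = s := by
  have hc : sᶜ.card = q := by simp [Finset.card_compl, hs]
  refine ⟨finSumFinEquiv.symm.trans (finSumEquivOfFinset hs hc), ?_, ?_⟩
  · rw [mem_shuffles_iff]
    exact ⟨fun i j hij => by simpa using hij, fun i j hij => by simpa using hij⟩
  · rw [← Finset.coe_inj, coe_leadingSet, ← Finset.range_orderEmbOfFin s hs]
    congr 1
    ext1 i
    simp

theorem sum_shuffles_leadingSet {X : Type*} [AddCommMonoid X] (g : Finset (Fin (p + q)) → X) :
    ∑ σ ∈ shuffles p q, g (leadingSet σ) = ∑ s : Finset (Fin (p + q)) with s.card = p, g s :=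
  Finset.sum_bij (fun σ _ => leadingSet σ) (fun σ _ => by simp [card_leadingSet])
    (fun _ hσ _ hτ => injOn_leadingSet hσ hτ)
    (fun _ hs => by simpa using exists_mem_shuffles_leadingSet_eq (Finset.mem_filter.1 hs).2)
    (fun _ _ => rfl)

theorem ιMulti_piecewise_leadingSet {K M : Type*} [CommRing K] [AddCommGroup M] [Module K M]
    (f g : Fin (p + q) → M) (σ : Equiv.Perm (Fin (p + q))) :
    ExteriorAlgebra.ιMulti K (p + q) ((leadingSet σ).piecewise f g) =
      (Equiv.Perm.sign σ : ℤ) •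
        (ExteriorAlgebra.ιMulti K p (f ∘ σ ∘ Fin.castAdd q) *
          ExteriorAlgebra.ιMulti K q (g ∘ σ ∘ Fin.natAdd p)) := by
  have append_eq : Fin.append (f ∘ σ ∘ Fin.castAdd q) (g ∘ σ ∘ Fin.natAdd p) =
      (leadingSet σ).piecewise f g ∘ σ := by
    ext1 i
    induction i using Fin.addCases with
    | left j => simp [apply_castAdd_mem_leadingSet]
    | right j => simp [apply_natAdd_notMem_leadingSet]
  rw [ExteriorAlgebra.ιMulti_mul_ιMulti, append_eq, AlternatingMap.map_perm, Units.smul_def,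
    smul_smul, ← Units.val_mul, Int.units_mul_self, Units.val_one, one_smul]

end Shuffles

section Lam

variable {K : Type} [Field K] {n : ℕ}

theorem coe_ecast {p q : ℕ} (h : p = q) (x : Lam K n p) :
    (ecast K n h x : ExteriorAlgebra K (V K n)) = x := by
  subst h
  rfl

variable (K n) in
/-- The embedding `Λ^p ⊗ Λ^q → Λ(V × V)`, sending `x ⊗ y` to the product of the copies of `x` and
`y` on the two summands. -/
def lamToProd (p q : ℕ) :
    Lam K n p ⊗[K] Lam K n q →ₗ[K] ExteriorAlgebra K (V K n × V K n) :=
  (tensorEquivProd K (V K n) (V K n)).toLinearMap ∘ₗ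
    TensorProduct.map (Submodule.subtype _) (Submodule.subtype _)

theorem lamToProd_tmul {p q : ℕ} (x : Lam K n p) (y : Lam K n q) :
    lamToProd K n p q (x ⊗ₜ y) =
      ExteriorAlgebra.map (LinearMap.inl K (V K n) (V K n)) x.1 *
        ExteriorAlgebra.map (LinearMap.inr K (V K n) (V K n)) y.1 :=
  tensorEquivProd_tmul x.1 y.1

theorem lamToProd_injective (p q : ℕ) : Function.Injective (lamToProd K n p q) := by
  rw [lamToProd, LinearMap.coe_comp]
  exact (tensorEquivProd K _ _).injective.comp (TensorProduct.map_injective_of_flat_flat _ _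
    (Submodule.injective_subtype _) (Submodule.injective_subtype _))

theorem lamToProd_congr_ecast {p p' q q' : ℕ} (hp : p = p') (hq : q = q')
    (z : Lam K n p ⊗[K] Lam K n q) :
    lamToProd K n p' q' (TensorProduct.congr (ecast K n hp) (ecast K n hq) z) =
      lamToProd K n p q z := by
  subst hp hq
  exact congrArg _ (LinearMap.congr_fun (TensorProduct.map_id (R := K)) z)

theorem IsMulMap.coe_tmul {p q : ℕ} {m : Lam K n p ⊗[K] Lam K n q →ₗ[K] Lam K n (p + q)}
    (hm : IsMulMap K n p q m) (x : Lam K n p) (y : Lam K n q) :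
    (m (x ⊗ₜ y) : ExteriorAlgebra K (V K n)) = x.1 * y.1 := by
  have h : (TensorProduct.mk K _ _).compr₂ (Submodule.subtype _ ∘ₗ m) =
      (LinearMap.mul K (ExteriorAlgebra K (V K n))).compl₁₂ (Submodule.subtype _)
        (Submodule.subtype _) := by
    refine exteriorPower.linearMap_ext (AlternatingMap.ext fun v =>
      exteriorPower.linearMap_ext (AlternatingMap.ext fun w => ?_))
    exact (congrArg Subtype.val (hm v w)).trans (ExteriorAlgebra.ιMulti_mul_ιMulti v w).symm
  exact LinearMap.congr_fun₂ h x y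

theorem IsComulMap.lamToProd_apply {p q : ℕ} {D : Lam K n (p + q) →ₗ[K] Lam K n p ⊗[K] Lam K n q}
    (hD : IsComulMap K n p q D) (x : Lam K n (p + q)) :
    lamToProd K n p q (D x) = comul q x.1 := by
  have h : lamToProd K n p q ∘ₗ D = comul q ∘ₗ Submodule.subtype _ := by
    refine exteriorPower.linearMap_ext (AlternatingMap.ext fun v => ?_)
    have card_iff (s : Finset (Fin (p + q))) : sᶜ.card = q ↔ s.card = p := by
      have := s.card_add_card_compl
      rw [Fintype.card_fin] at this
      omega
    change lamToProd K n p q (D (wedge K n v)) = comul q (ExteriorAlgebra.ιMulti K (p + q) v)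
    rw [comul_ιMulti, Finset.filter_congr fun s _ => card_iff s, ← sum_shuffles_leadingSet, hD v,
      map_sum]
    refine Finset.sum_congr rfl fun σ _ => ?_
    rw [ιMulti_piecewise_leadingSet, map_zsmul, lamToProd_tmul, wedge, wedge,
      ExteriorAlgebra.map_apply_ιMulti, ExteriorAlgebra.map_apply_ιMulti]
    rfl
  exact LinearMap.congr_fun h x

variable {mf : ∀ p q : ℕ, Lam K n p ⊗[K] Lam K n q →ₗ[K] Lam K n (p + q)}
  {Df : ∀ p q : ℕ, Lam K n (p + q) →ₗ[K] Lam K n p ⊗[K] Lam K n q}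

theorem lamToProd_deltaMap (hmf : ∀ p q, IsMulMap K n p q (mf p q))
    (hDf : ∀ p q, IsComulMap K n p q (Df p q)) {a b t : ℕ} (ht : t ≤ b)
    (x : Lam K n a) (y : Lam K n b) :
    lamToProd K n (a + t) (b - t) (deltaMap K n mf Df a b t ht (x ⊗ₜ y)) =
      ExteriorAlgebra.map (LinearMap.inl K _ _) x.1 * comul (b - t) y.1 := by
  rw [← coe_ecast (Nat.add_sub_cancel' ht).symm y, ← (hDf _ _).lamToProd_apply]
  simp only [deltaMap, LinearMap.comp_apply, TensorProduct.map_tmul, LinearMap.id_apply,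
    LinearEquiv.coe_coe]
  generalize Df t (b - t) _ = w
  induction w with
  | zero => simp
  | add u v hu hv => simp only [TensorProduct.tmul_add, map_add, hu, hv, mul_add]
  | tmul u v =>
    rw [TensorProduct.assoc_symm_tmul, TensorProduct.map_tmul, lamToProd_tmul, lamToProd_tmul,
      (hmf a t).coe_tmul, map_mul, mul_assoc, LinearMap.id_apply]

theorem lamToProd_thetaMap (hmf : ∀ p q, IsMulMap K n p q (mf p q))
    (hDf : ∀ p q, IsComulMap K n p q (Df p q)) {a b t : ℕ} (ht : t ≤ a)
    (z : Lam K n a ⊗[K] Lam K n b) :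
    lamToProd K n (a - t) (b + t) (thetaMap K n mf Df a b t ht z) =
      lowering t (lamToProd K n a b z) := by
  induction z with
  | zero => simp
  | add u v hu hv => simp only [map_add, hu, hv]
  | tmul x y =>
    rw [lamToProd_tmul, lowering_map_inl_mul_map_inr,
      ← coe_ecast (Nat.sub_add_cancel ht).symm x, ← (hDf _ _).lamToProd_apply]
    simp only [thetaMap, LinearMap.comp_apply, TensorProduct.map_tmul, LinearMap.id_apply,
      LinearEquiv.coe_coe]
    generalize Df (a - t) t _ = w
    induction w with
    | zero => simp
    | add u v hu hv => simp only [TensorProduct.add_tmul, map_add, hu, hv, add_mul]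
    | tmul u v =>
      rw [TensorProduct.assoc_tmul, TensorProduct.map_tmul, lamToProd_tmul, lamToProd_tmul,
        LinearMap.comp_apply, LinearEquiv.coe_coe, coe_ecast, (hmf t b).coe_tmul, map_mul,
        mul_assoc, LinearMap.id_apply]

theorem lamToProd_PhiMap' (hmf : ∀ p q, IsMulMap K n p q (mf p q))
    (hDf : ∀ p q, IsComulMap K n p q (Df p q)) {a b t : ℕ} (hta : t ≤ a) (htb : t ≤ b)
    (x : Lam K n a) (y : Lam K n b) :
    lamToProd K n a b (PhiMap' K n mf Df a b t (x ⊗ₜ y)) =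
      lowering t (ExteriorAlgebra.map (LinearMap.inl K _ _) x.1 * comul (b - t) y.1) := by
  rw [PhiMap', dif_pos ⟨hta, htb⟩, PhiMap, LinearMap.comp_apply, LinearMap.comp_apply,
    LinearEquiv.coe_coe, lamToProd_congr_ecast, lamToProd_thetaMap hmf hDf,
    lamToProd_deltaMap hmf hDf]

theorem PhiMap'_zero (hmf : ∀ p q, IsMulMap K n p q (mf p q))
    (hDf : ∀ p q, IsComulMap K n p q (Df p q)) (a b : ℕ) :
    PhiMap' K n mf Df a b 0 = LinearMap.id := by
  refine TensorProduct.ext' fun x y => lamToProd_injective a b ?_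
  rw [lamToProd_PhiMap' hmf hDf a.zero_le b.zero_le, Nat.sub_zero, comul_self y.2,
    lowering_map_inl_mul_map_inr, comul_zero, LinearMap.id_apply, lamToProd_tmul]

theorem lamToProd_pairMul (hmf : ∀ p q, IsMulMap K n p q (mf p q)) {p₁ q₁ p₂ q₂ : ℕ}
    (u : Lam K n p₁ ⊗[K] Lam K n q₁) (w : Lam K n p₂ ⊗[K] Lam K n q₂) :
    lamToProd K n (p₁ + p₂) (q₁ + q₂) (pairMul K n mf p₁ q₁ p₂ q₂ (u ⊗ₜ w)) =
      (-1 : K) ^ (p₂ * q₁) • (lamToProd K n p₁ q₁ u * lamToProd K n p₂ q₂ w) := by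
  induction u with
  | zero => simp
  | add u v hu hv => simp only [TensorProduct.add_tmul, map_add, hu, hv, add_mul, smul_add]
  | tmul x₁ x₂ =>
    induction w with
    | zero => simp
    | add u v hu hv => simp only [TensorProduct.tmul_add, map_add, hu, hv, mul_add, smul_add]
    | tmul y₁ y₂ =>
      simp only [pairMul, LinearMap.comp_apply, LinearEquiv.coe_coe,
        TensorProduct.tensorTensorTensorComm_tmul, TensorProduct.map_tmul, lamToProd_tmul,
        (hmf _ _).coe_tmul, map_mul]
      rw [mul_assoc, ← mul_assoc (ExteriorAlgebra.map _ y₁.1), map_mul_map_comm _ _ y₁.2 x₂.2,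
        smul_mul_assoc, mul_smul_comm]
      simp only [mul_assoc]

theorem lamToProd_phiSmall (hmf : ∀ p q, IsMulMap K n p q (mf p q))
    (hDf : ∀ p q, IsComulMap K n p q (Df p q)) {a b k : ℕ} (hka : k ≤ a) (hkb : k ≤ b)
    (x : Lam K n a) (y : Lam K n b) :
    lamToProd K n a b (phiSmall K n mf Df a b k hka hkb (x ⊗ₜ y)) =
      (-1 : K) ^ k • (comul k x.1 * comul (b - k) y.1) := by
  have neg_one_pow_mul_self : (-1 : K) ^ (k * k) = (-1) ^ k := by
    rw [pow_mul]
    rcases Nat.even_or_odd k with h | h <;> simp [h.neg_one_pow]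
  simp only [phiSmall, LinearMap.comp_apply, LinearEquiv.coe_coe, TensorProduct.map_tmul]
  rw [lamToProd_congr_ecast, lamToProd_pairMul hmf, (hDf _ _).lamToProd_apply,
    (hDf _ _).lamToProd_apply, coe_ecast, coe_ecast, neg_one_pow_mul_self]

theorem phiSmall_eq_sum_PhiMap' (hmf : ∀ p q, IsMulMap K n p q (mf p q))
    (hDf : ∀ p q, IsComulMap K n p q (Df p q)) {a b k : ℕ} (hka : k ≤ a) (hkb : k ≤ b) :
    phiSmall K n mf Df a b k hka hkb =
      ∑ t ∈ Finset.range (k + 1),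
        ((-1 : K) ^ t * ((b - t).choose (k - t) : K)) • PhiMap' K n mf Df a b t := by
  refine TensorProduct.ext' fun x y => lamToProd_injective a b ?_
  rw [lamToProd_phiSmall hmf hDf hka hkb, comul_mul_comul x.1 y.2 hkb, Finset.smul_sum,
    LinearMap.sum_apply, map_sum]
  refine Finset.sum_congr rfl fun t ht => ?_
  have htk : t ≤ k := Nat.lt_succ_iff.1 (Finset.mem_range.1 ht)
  have sign_eq : (-1 : K) ^ k * (-1) ^ (k - t) = (-1) ^ t := by
    obtain ⟨j, rfl⟩ := Nat.exists_eq_add_of_le htk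
    rw [Nat.add_sub_cancel_left, pow_add, mul_assoc, ← mul_pow]
    simp
  rw [LinearMap.smul_apply, map_smul, lamToProd_PhiMap' hmf hDf (htk.trans hka) (htk.trans hkb),
    smul_smul, ← mul_assoc, sign_eq]

end Lam

theorem statement7_general (K : Type) [Field K] (n : ℕ) {a b k : ℕ} (hka : k ≤ a) (hkb : k ≤ b)
    (mf : ∀ p q : ℕ, Lam K n p ⊗[K] Lam K n q →ₗ[K] Lam K n (p + q))
    (Df : ∀ p q : ℕ, Lam K n (p + q) →ₗ[K] Lam K n p ⊗[K] Lam K n q)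
    (hmf : ∀ p q, IsMulMap K n p q (mf p q))
    (hDf : ∀ p q, IsComulMap K n p q (Df p q)) :
    phiSmall K n mf Df a b k hka hkb =
      ∑ t ∈ Finset.range (k + 1),
        ((-1 : K) ^ t * ((b - t).choose (k - t) : K)) • PhiMap' K n mf Df a b t ∧
    psiSmall K n mf Df a b k hka hkb =
      ∑ t ∈ Finset.Icc 1 k,
        ((-1 : K) ^ (t - 1) * ((b - t).choose (k - t) : K)) • PhiMap' K n mf Df a b t := by
  have phi_eq := phiSmall_eq_sum_PhiMap' hmf hDf hka hkb
  refine ⟨phi_eq, ?_⟩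
  have neg_sign {t : ℕ} (ht : t ∈ Finset.Icc 1 k) : (-1 : K) ^ (t - 1) = -(-1) ^ t := by
    rw [← Nat.sub_add_cancel (Finset.mem_Icc.1 ht).1, Nat.add_sub_cancel, pow_succ, mul_neg_one,
      neg_neg]
  calc psiSmall K n mf Df a b k hka hkb
      = -∑ t ∈ Finset.Icc 1 k,
          ((-1 : K) ^ t * ((b - t).choose (k - t) : K)) • PhiMap' K n mf Df a b t := by
        rw [psiSmall, phi_eq, Finset.range_eq_Ico,
          Finset.sum_eq_sum_Ico_succ_bot (Nat.succ_pos k), PhiMap'_zero hmf hDf, ← sub_sub]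
        simp [Finset.Ico_add_one_right_eq_Icc]
    _ = ∑ t ∈ Finset.Icc 1 k,
          ((-1 : K) ^ (t - 1) * ((b - t).choose (k - t) : K)) • PhiMap' K n mf Df a b t := by
        rw [← Finset.sum_neg_distrib]
        exact Finset.sum_congr rfl fun t ht => by
          rw [neg_sign ht]
          module

/-- Lemma 4.3 of the paper: `φ_k = Σ_{t=0}^{k} (−1)^t C(b−t,k−t)·Φ_t` and
`ψ_k = Σ_{t=1}^{k} (−1)^{t−1} C(b−t,k−t)·Φ_t`. -/
theorem statement7 (K : Type) [Field K] [CharZero K] (n : ℕ) (a b k : ℕ)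
    (hba : b ≤ a) (hk1 : 1 ≤ k) (hkb : k ≤ b)
    (mf : ∀ p q : ℕ, Lam K n p ⊗[K] Lam K n q →ₗ[K] Lam K n (p+q))
    (Df : ∀ p q : ℕ, Lam K n (p+q) →ₗ[K] Lam K n p ⊗[K] Lam K n q)
    (hmf : ∀ p q, IsMulMap K n p q (mf p q))
    (hDf : ∀ p q, IsComulMap K n p q (Df p q)) :
    phiSmall K n mf Df a b k (hkb.trans hba) hkb =
      ∑ t ∈ Finset.range (k+1),
        ((-1:K)^t * ((b-t).choose (k-t) : K)) • PhiMap' K n mf Df a b t ∧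
    psiSmall K n mf Df a b k (hkb.trans hba) hkb =
      ∑ t ∈ Finset.Icc 1 k,
        ((-1:K)^(t-1) * ((b-t).choose (k-t) : K)) • PhiMap' K n mf Df a b t := by
  exact statement7_general K n (hkb.trans hba) hkb mf Df hmf hDf

end MMS
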